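/- arXiv:1710.10981 — 2 statements merged into one kernel-verified Lean document; each statement's English description precedes it below -/
import Mathlib

section
/- Suppose the effective domain of the conjugate value function φ* is contained in the cone C*_+ of nonnegative continuous linear functionals on C, and that dom G_t* ⊆ M_t for each t = 0,…,T. Then dom φ* ⊆ M; that is, every λ ∈ C* with φ*(λ) < ∞ is represented by a finite ℝ^d-valued Borel measure on S under which ψ is integrable. -/
/-!
Finiteness of `φ*(λ)` forces finiteness of every `G_t*(λ_t)` (`conj_marginal_ne_top`), so each
marginal `λ_t` is a vector measure, and each component of it is dominated on nonnegative functions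
by a finite measure `ρ_t` (`exists_dominating_measure`), which is tight because `S_t` is Polish.

The components `λ^i` of `λ` are positive linear functionals on bounded continuous functions.
Their weighted marginals being dominated by tight measures, they are themselves tight: up to `ε`,
`λ^i` only sees the values of a function on some compact product `∏ K_t` (`tight_of_marginals`).
A tight positive functional is integration against a finite measure `ν_i`
(`exists_measure_of_tight`), by the Riesz-Markov-Kakutani theorem on the Stone-Čech
compactification. As elements of `C` are represented by `u/ψ`, the measure representing `λ^i` in the
original sense is `ν_i/ψ`, which integrates `ψ` (`exists_signed_of_measure`).
-/

open MeasureTheory Filter Set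
open scoped ENNReal

noncomputable section

/-- The positive part of an extended real number, as an extended nonnegative real. -/
def EReal.posPart' (x : EReal) : ℝ≥0∞ := if x = ⊤ then ⊤ else ENNReal.ofReal x.toReal

/-- Integral of an `EReal`-valued function, with the convention that the value is `⊤`
whenever the positive part fails to be integrable. -/
def eInt {X : Type*} [MeasurableSpace X] (μ : Measure X) (f : X → EReal) : EReal :=
  if (∫⁻ s, (f s).posPart' ∂μ) = ⊤ then ⊤
  else ((∫⁻ s, (f s).posPart' ∂μ : ℝ≥0∞) : EReal) -
    ((∫⁻ s, (-(f s)).posPart' ∂μ : ℝ≥0∞) : EReal)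

/-- Integral of a real function against a finite signed measure, via the Jordan
decomposition. -/
def sInt {X : Type*} [MeasurableSpace X] (m : SignedMeasure X) (f : X → ℝ) : ℝ :=
  ∫ s, f s ∂m.toJordanDecomposition.posPart - ∫ s, f s ∂m.toJordanDecomposition.negPart

/-- Convexity of an extended-real-valued function on a real vector space. -/
def EConvexOn {E : Type*} [AddCommGroup E] [Module ℝ E] (k : E → EReal) : Prop :=
  ∀ x y : E, ∀ a b : ℝ, 0 ≤ a → 0 ≤ b → a + b = 1 →
    k (a • x + b • y) ≤ (a : EReal) * k x + (b : EReal) * k y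

/-- Properness of an extended-real-valued function: it is nowhere `−∞` and somewhere
finite. -/
def EProper {E : Type*} (k : E → EReal) : Prop := (∃ x, k x ≠ ⊤) ∧ ∀ x, k x ≠ ⊥

/-- The recession function `k^∞` of a (convex lsc) function `k`:
`k^∞(x) = sup_{α>0} (k(x̄ + αx) − k(x̄))/α`, the supremum being taken also over all
points `x̄` of the domain of `k` (for convex lsc `k` it does not depend on `x̄`). -/
def erec {E : Type*} [AddCommGroup E] [Module ℝ E] (k : E → EReal) (x : E) : EReal :=
  ⨆ (y : E) (_ : k y < ⊤) (a : ℝ) (_ : 0 < a),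
    (((a⁻¹ : ℝ)) : EReal) * (k (y + a • x) - k y)

/-- The l.s.c. hull of the domain membership:  here simply the closure of the domain. -/
def edom {E : Type*} [TopologicalSpace E] (k : E → EReal) : Set E := closure {x | k x < ⊤}

/-- `v` belongs to the subdifferential `∂k(x)` (w.r.t. the euclidean pairing). -/
def ESubdiffAt {ι : Type*} [Fintype ι] (k : (ι → ℝ) → EReal) (x v : ι → ℝ) : Prop :=
  ∀ y : ι → ℝ, k x + ((∑ i, v i * (y i - x i) : ℝ) : EReal) ≤ k y

/-- `v` belongs to the normal cone `N_D(x)` of `D` at `x`. -/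
def InNormalCone {ι : Type*} [Fintype ι] (D : Set (ι → ℝ)) (x v : ι → ℝ) : Prop :=
  x ∈ D ∧ ∀ y ∈ D, (∑ i, v i * (y i - x i)) ≤ 0

/-- A property of points of `S = ∏ t, S t` holds `(μ_t)`-almost everywhere if it holds on
a Cartesian product of sets of full measure. -/
def ProdAE {T : ℕ} {S : Fin (T + 1) → Type*} [∀ t, MeasurableSpace (S t)]
    (μt : ∀ t, Measure (S t)) (P : (∀ t, S t) → Prop) : Prop :=
  ∃ A : ∀ t, Set (S t), (∀ t, MeasurableSet (A t) ∧ μt t (A t) = 1) ∧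
    ∀ s ∈ Set.univ.pi A, P s

/-- A set-valued mapping `D : S ⇉ ℝ^d` is inner semicontinuous if the preimage of every
open set is open. -/
def InnerSemicontinuous {X E : Type*} [TopologicalSpace X] [TopologicalSpace E]
    (D : X → Set E) : Prop :=
  ∀ O : Set E, IsOpen O → IsOpen {x | (D x ∩ O).Nonempty}

end

noncomputable section Weighted

open MeasureTheory Filter Set BoundedContinuousFunction

variable {T d : ℕ} {S : Fin (T + 1) → Type*} [∀ t, TopologicalSpace (S t)]

/-- The weight `ψ(s) = ∑_t ψ_t(s_t)` on the product space. -/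
def psiS (ψt : ∀ t, S t → ℝ) (s : ∀ t, S t) : ℝ := ∑ t, ψt t (s t)

lemma psiS_pos (ψt : ∀ t, S t → ℝ) (hψ1 : ∀ t st, 1 ≤ ψt t st) (s : ∀ t, S t) :
    0 < psiS ψt s := by
  have h : (1 : ℝ) ≤ psiS ψt s :=
    le_trans (hψ1 0 (s 0))
      (Finset.single_le_sum (f := fun t => ψt t (s t))
        (fun r _ => le_trans zero_le_one (hψ1 r (s r))) (Finset.mem_univ 0))
  linarith

lemma psiS_cont (ψt : ∀ t, S t → ℝ) (hψc : ∀ t, Continuous (ψt t)) :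
    Continuous (psiS ψt) :=
  continuous_finset_sum _ (fun t _ => (hψc t).comp (continuous_apply t))

/-- The canonical embedding `C_t → C`, `x_t ↦ x_t ∘ π_t`, in the normalized
representation in which an element `x` of the weighted space `C_t` is represented by
the bounded continuous function `x/ψ_t` (so an element `u` of `C` represents the
function `s ↦ ψ(s) • u(s)`). -/
def embedT (ψt : ∀ t, S t → ℝ) (hψc : ∀ t, Continuous (ψt t))
    (hψ1 : ∀ t st, 1 ≤ ψt t st) (t : Fin (T + 1)) (x : S t →ᵇ (Fin d → ℝ)) :
    (∀ r, S r) →ᵇ (Fin d → ℝ) :=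
  BoundedContinuousFunction.ofNormedAddCommGroup
    (fun s => (ψt t (s t) / psiS ψt s) • x (s t))
    (by
      have h1 : Continuous fun s : ∀ r, S r => ψt t (s t) := (hψc t).comp (continuous_apply t)
      have h2 : Continuous (psiS ψt) := psiS_cont ψt hψc
      have h3 : Continuous fun s : ∀ r, S r => x (s t) := x.continuous.comp (continuous_apply t)
      exact (h1.div h2 fun s => (psiS_pos ψt hψ1 s).ne').smul h3)
    ‖x‖
    (by
      intro s
      have hpos := psiS_pos ψt hψ1 s
      have hle : ψt t (s t) / psiS ψt s ≤ 1 := by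
        rw [div_le_one hpos]
        exact Finset.single_le_sum (f := fun r => ψt r (s r))
          (fun r _ => le_trans zero_le_one (hψ1 r (s r))) (Finset.mem_univ t)
      have h0 : 0 ≤ ψt t (s t) / psiS ψt s :=
        div_nonneg (le_trans zero_le_one (hψ1 t (s t))) hpos.le
      calc ‖(ψt t (s t) / psiS ψt s) • x (s t)‖
          = |ψt t (s t) / psiS ψt s| * ‖x (s t)‖ := by
            rw [norm_smul, Real.norm_eq_abs]
        _ ≤ 1 * ‖x‖ := by
            apply mul_le_mul (by rwa [abs_of_nonneg h0]) (x.norm_coe_le_norm _)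
              (norm_nonneg _) zero_le_one
        _ = ‖x‖ := one_mul _)

end Weighted

noncomputable section Helpers

open MeasureTheory Filter Set BoundedContinuousFunction Topology
open scoped ENNReal

/-! ### Riesz representation of tight functionals -/

/-- **Riesz representation for tight functionals.** The functional is transported to the
Stone-Čech compactification `βX` and represented there by a regular measure `μ`; tightness makes
`μ` live on a countable union of compact subsets of `X`. -/
lemma exists_measure_of_tight {X : Type*} [TopologicalSpace X] [T35Space X] [MeasurableSpace X]
    [BorelSpace X] [Nonempty X] (Λ : (X →ᵇ ℝ) →ₗ[ℝ] ℝ)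
    (hΛ : ∀ f : X →ᵇ ℝ, (∀ x, 0 ≤ f x) → 0 ≤ Λ f)
    (htight : ∀ ε : ℝ, 0 < ε → ∃ K : Set X, IsCompact K ∧ ∀ f : X →ᵇ ℝ,
      (∀ x, 0 ≤ f x) → (∀ x, f x ≤ 1) → (∀ x ∈ K, f x = 0) → Λ f ≤ ε) :
    ∃ ν : Measure X, IsFiniteMeasure ν ∧ ∀ f : X →ᵇ ℝ, Λ f = ∫ x, f x ∂ν := by
  classical
  let : MeasurableSpace (StoneCech X) := borel _
  have : BorelSpace (StoneCech X) := ⟨rfl⟩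
  let ι : C(X, StoneCech X) := ⟨stoneCechUnit, continuous_stoneCechUnit⟩
  have hι : Function.Injective ι := injective_stoneCechUnit_of_t35Space
  let Φ : CompactlySupportedContinuousMap (StoneCech X) ℝ →ₗ[ℝ] ℝ :=
    { toFun := fun h => Λ ((mkOfCompact h.toContinuousMap).compContinuous ι)
      map_add' := fun a b => by rw [← map_add]; rfl
      map_smul' := fun a b => by rw [RingHom.id_apply, ← map_smul]; rfl }
  let Ψ := PositiveLinearMap.mk₀ Φ (fun h hh => hΛ _ fun x => CompactlySupportedContinuousMap.le_def.1 hh (ι x))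
  let μ := RealRMK.rieszMeasure Ψ
  -- Mass of the compactification away from a compact subset of `X`.
  have hmass : ∀ ε : ℝ, 0 < ε → ∃ K : Set X, IsCompact K ∧ μ (ι '' K)ᶜ ≤ ENNReal.ofReal ε := by
    intro ε hε
    obtain ⟨K, hK, hKf⟩ := htight ε hε
    refine ⟨K, hK, ?_⟩
    have hKc : IsClosed (ι '' K) := (hK.image ι.continuous).isClosed
    rw [hKc.isOpen_compl.measure_eq_iSup_isCompact]
    refine iSup₂_le fun L hL => iSup_le fun hLc => ?_
    obtain ⟨g, hg0, hg1, hg⟩ := exists_continuous_zero_one_of_isClosed hKc hLc.isClosed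
      (disjoint_left.2 fun x hx hxL => hL hxL hx)
    refine (RealRMK.rieszMeasure_le_of_eq_one Ψ
      (f := ⟨g, HasCompactSupport.of_compactSpace _⟩) (fun x => (hg x).1) hLc hg1).trans ?_
    exact ENNReal.ofReal_le_ofReal (hKf _ (fun x => (hg _).1) (fun x => (hg _).2)
      fun x hx => hg0 (mem_image_of_mem _ hx))
  choose! K hK hKμ using hmass
  let k : ℕ → Set X := fun n => K (1 / (n + 1))
  have hk : ∀ n, IsCompact (k n) := fun n => hK _ Nat.one_div_pos_of_nat
  let A : Set (StoneCech X) := ⋃ n, ι '' k n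
  have hA : μ Aᶜ = 0 := by
    have hlim : Tendsto (fun n : ℕ => ENNReal.ofReal (1 / ((n : ℝ) + 1))) atTop (𝓝 0) := by
      have := ENNReal.tendsto_ofReal (tendsto_one_div_add_atTop_nhds_zero_nat (𝕜 := ℝ))
      simpa using this
    refine le_antisymm (ge_of_tendsto' hlim fun n => ?_) zero_le
    exact (measure_mono (compl_subset_compl.2 (subset_iUnion (fun n => ι '' k n) n))).trans
      (hKμ _ Nat.one_div_pos_of_nat)
  have hAmeas : MeasurableSet A :=
    MeasurableSet.iUnion fun n => ((hk n).image ι.continuous).measurableSet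
  -- A measurable left inverse of the embedding, on the full-measure set `A`.
  obtain ⟨x₀⟩ := ‹Nonempty X›
  let g : StoneCech X → X := fun z => if z ∈ A then Function.invFun ι z else x₀
  have : Nonempty X := ⟨x₀⟩
  have hgι : ∀ x, ι x ∈ A → g (ι x) = x := fun x hx => by
    simp only [g, if_pos hx]; exact Function.leftInverse_invFun hι x
  have hg : Measurable g := by
    refine measurable_of_isClosed fun F hF => ?_
    have : g ⁻¹' F = (⋃ n, ι '' (k n ∩ F)) ∪ (Aᶜ ∩ {_z | x₀ ∈ F}) := by
      ext z
      by_cases hz : z ∈ A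
      · obtain ⟨n, x, hx, rfl⟩ := mem_iUnion.1 hz
        rw [mem_preimage, hgι x hz]
        constructor
        · exact fun hxF => Or.inl (mem_iUnion.2 ⟨n, x, ⟨hx, hxF⟩, rfl⟩)
        · rintro (h | h)
          · obtain ⟨m, y, hy, hyx⟩ := mem_iUnion.1 h
            rw [← hι hyx]; exact hy.2
          · exact absurd hz h.1
      · have h1 : z ∉ ⋃ n, ι '' (k n ∩ F) := fun h => hz <| by
          obtain ⟨m, y, hy, rfl⟩ := mem_iUnion.1 h
          exact mem_iUnion.2 ⟨m, y, hy.1, rfl⟩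
        simp [g, hz, h1]
    rw [this]
    exact (MeasurableSet.iUnion fun n =>
      (((hk n).inter_right hF).image ι.continuous).measurableSet).union
        (hAmeas.compl.inter (MeasurableSet.const _))
  refine ⟨μ.map g, inferInstance, fun f => ?_⟩
  -- Extend `f` to the compactification.
  have hfb : ∀ x, f x ∈ Icc (-‖f‖) ‖f‖ := fun x => abs_le.1 (f.norm_coe_le_norm x)
  let f' : X → Icc (-‖f‖) ‖f‖ := fun x => ⟨f x, hfb x⟩
  have hf' : Continuous f' := f.continuous.subtype_mk _
  let F : CompactlySupportedContinuousMap (StoneCech X) ℝ :=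
    ⟨⟨fun z => ((stoneCechExtend hf' z : Icc (-‖f‖) ‖f‖) : ℝ),
      continuous_subtype_val.comp (continuous_stoneCechExtend hf')⟩,
      HasCompactSupport.of_compactSpace _⟩
  have hF : ∀ x, F (ι x) = f x := fun x =>
    congrArg Subtype.val (stoneCechExtend_stoneCechUnit hf' x)
  have h1 : Λ f = ∫ z, F z ∂μ := by
    rw [RealRMK.integral_rieszMeasure]
    change Λ f = Λ _
    congr 1
    ext x
    exact (hF x).symm
  rw [h1, integral_map hg.aemeasurable f.continuous.measurable.aestronglyMeasurable]
  refine integral_congr_ae ?_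
  have : ∀ᵐ z ∂μ, z ∈ A := hA
  filter_upwards [this] with z hz
  obtain ⟨n, x, hx, rfl⟩ := mem_iUnion.1 hz
  rw [hgι x hz, hF]

/-! ### Tightness from the marginals -/

variable {T d : ℕ} {S : Fin (T + 1) → Type*} [∀ t, TopologicalSpace (S t)]

lemma psiS_ge (ψt : ∀ t, S t → ℝ) (hψ1 : ∀ t st, 1 ≤ ψt t st) (t : Fin (T + 1))
    (s : ∀ t, S t) : ψt t (s t) ≤ psiS ψt s :=
  Finset.single_le_sum (f := fun r => ψt r (s r))
    (fun r _ => zero_le_one.trans (hψ1 r (s r))) (Finset.mem_univ t)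

/-- The function `s ↦ (ψ_t(s_t) / ψ(s)) g(s_t)` on the product space: the scalar version of
`embedT`. -/
def wpull (ψt : ∀ t, S t → ℝ) (hψc : ∀ t, Continuous (ψt t)) (hψ1 : ∀ t st, 1 ≤ ψt t st)
    (t : Fin (T + 1)) (g : S t →ᵇ ℝ) : (∀ r, S r) →ᵇ ℝ :=
  BoundedContinuousFunction.ofNormedAddCommGroup
    (fun s => ψt t (s t) / psiS ψt s * g (s t))
    ((((hψc t).comp (continuous_apply t)).div (psiS_cont ψt hψc)
      fun s => (psiS_pos ψt hψ1 s).ne').mul (g.continuous.comp (continuous_apply t)))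
    ‖g‖
    (by
      intro s
      have hpos := psiS_pos ψt hψ1 s
      have h0 : 0 ≤ ψt t (s t) / psiS ψt s := div_nonneg (zero_le_one.trans (hψ1 t _)) hpos.le
      rw [norm_mul, Real.norm_of_nonneg h0]
      exact (mul_le_of_le_one_left (norm_nonneg _)
        ((div_le_one hpos).2 (psiS_ge ψt hψ1 t s))).trans (g.norm_coe_le_norm _))

lemma wpull_apply (ψt : ∀ t, S t → ℝ) (hψc : ∀ t, Continuous (ψt t))
    (hψ1 : ∀ t st, 1 ≤ ψt t st) (t : Fin (T + 1)) (g : S t →ᵇ ℝ) (s : ∀ r, S r) :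
    wpull ψt hψc hψ1 t g s = ψt t (s t) / psiS ψt s * g (s t) := rfl

lemma integral_le_measureReal {X : Type*} [TopologicalSpace X] [MeasurableSpace X]
    [OpensMeasurableSpace X] (ρ : Measure X) [IsFiniteMeasure ρ] (g : X →ᵇ ℝ) {A : Set X}
    (hA : MeasurableSet A) (hg1 : ∀ x, g x ≤ 1) (hg0 : ∀ x ∉ A, g x = 0) :
    ∫ x, g x ∂ρ ≤ ρ.real A := by
  rw [← integral_indicator_one hA]
  refine integral_mono (g.integrable ρ) ((integrable_const 1).indicator hA) fun x => ?_
  by_cases hx : x ∈ A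
  · simpa [hx] using hg1 x
  · simp [hx, hg0 x hx]

/-- The tube lemma for a finite product of compact sets. -/
lemma exists_open_box [∀ t, PolishSpace (S t)] (K : ∀ t, Set (S t)) (hK : ∀ t, IsCompact (K t))
    (U : Set (∀ t, S t)) (hU : IsOpen U) (hKU : univ.pi K ⊆ U) :
    ∃ V : ∀ t, Set (S t), (∀ t, IsOpen (V t)) ∧ (∀ t, K t ⊆ V t) ∧ univ.pi V ⊆ U := by
  let : ∀ t, MetricSpace (S t) := fun t => TopologicalSpace.metrizableSpaceMetric (S t)
  obtain ⟨δ, hδ, hδU⟩ := (isCompact_univ_pi hK).exists_thickening_subset_open hU hKU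
  refine ⟨fun t => Metric.thickening δ (K t), fun t => Metric.isOpen_thickening,
    fun t => Metric.self_subset_thickening hδ _, fun s hs => hδU ?_⟩
  have : ∀ t, ∃ z ∈ K t, dist (s t) z < δ := fun t => Metric.mem_thickening_iff.1 (hs t trivial)
  choose z hz hd using this
  exact Metric.mem_thickening_iff.2 ⟨z, fun t _ => hz t, (dist_pi_lt_iff hδ).2 hd⟩

/-- A continuous function exceeds high levels only on sets of small finite measure. -/
lemma exists_tail {X : Type*} [TopologicalSpace X] [MeasurableSpace X]
    [OpensMeasurableSpace X] (ρ : Measure X) [IsFiniteMeasure ρ] (ψ : X → ℝ) (hψ : Continuous ψ)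
    {ε : ℝ} (hε : 0 < ε) : ∀ᶠ n : ℕ in atTop, ρ.real {x | (n : ℝ) < ψ x} < ε := by
  have hm : Antitone fun n : ℕ => {x | (n : ℝ) < ψ x} := fun a b hab x (hx : (b : ℝ) < ψ x) =>
    lt_of_le_of_lt (Nat.cast_le.2 hab) hx
  have h0 : ⋂ n : ℕ, {x | (n : ℝ) < ψ x} = ∅ := by
    refine eq_empty_of_forall_notMem fun x hx => ?_
    obtain ⟨n, hn⟩ := exists_nat_gt (ψ x)
    exact lt_asymm hn (mem_iInter.1 hx n)
  have := tendsto_measure_iInter_atTop (μ := ρ)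
    (fun n : ℕ => (measurableSet_lt measurable_const hψ.measurable).nullMeasurableSet) hm
    ⟨0, measure_ne_top _ _⟩
  rw [h0, measure_empty] at this
  have h2 := (ENNReal.tendsto_toReal ENNReal.zero_ne_top).comp this
  exact h2.eventually_lt_const (by simpa using hε)

/-- **Tightness from the marginals.** If the weighted marginals of a positive functional are
dominated by finite measures `ρ_t`, the functional is tight. A function `f` supported off
`∏ K_t` is nearly dominated by `∑_t χ_t(s_t)`, where `χ_t` vanishes on `K_t`. The `t`-th marginal
only controls `(ψ_t/ψ) χ_t`, while `χ_t = ∑_r (ψ_r/ψ) χ_t` also involves the other weights; these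
are handled by `ψ_r χ_t ≤ (N + 1) ψ_t χ_t + ψ_r θ_r`, with `θ_r` supported where `ψ_r > N`. -/
lemma tight_of_marginals [∀ t, PolishSpace (S t)] [∀ t, MeasurableSpace (S t)]
    [∀ t, BorelSpace (S t)] (ψt : ∀ t, S t → ℝ) (hψc : ∀ t, Continuous (ψt t))
    (hψ1 : ∀ t st, 1 ≤ ψt t st) (Λ : ((∀ t, S t) →ᵇ ℝ) →ₗ[ℝ] ℝ)
    (hΛ : ∀ f : (∀ t, S t) →ᵇ ℝ, (∀ x, 0 ≤ f x) → 0 ≤ Λ f)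
    (ρ : ∀ t, Measure (S t)) [∀ t, IsFiniteMeasure (ρ t)]
    (hρ : ∀ t (g : S t →ᵇ ℝ), (∀ x, 0 ≤ g x) →
      Λ (wpull ψt hψc hψ1 t g) ≤ ∫ x, g x ∂(ρ t))
    (ε : ℝ) (hε : 0 < ε) :
    ∃ K : Set (∀ t, S t), IsCompact K ∧ ∀ f : (∀ t, S t) →ᵇ ℝ,
      (∀ x, 0 ≤ f x) → (∀ x, f x ≤ 1) → (∀ x ∈ K, f x = 0) → Λ f ≤ ε := by
  have hmono : ∀ f g : (∀ t, S t) →ᵇ ℝ, (∀ x, f x ≤ g x) → Λ f ≤ Λ g := fun f g h => by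
    have := hΛ (g - f) fun x => sub_nonneg.2 (h x)
    rw [map_sub] at this; linarith
  let n : ℝ := (T + 1) * (T + 1)
  have hn : 0 < n := by positivity
  have hΛ1 : 0 ≤ Λ (const _ 1) := hΛ _ fun x => zero_le_one
  let η : ℝ := ε / 3 / (Λ (const _ 1) + 1)
  have hη : 0 < η := by positivity
  have hη1 : η * Λ (const _ 1) ≤ ε / 3 := by
    rw [div_mul_eq_mul_div, div_le_iff₀ (by positivity)]; nlinarith
  -- a level `N` above which all the weights carry little mass
  obtain ⟨N, hN⟩ := (eventually_all.2 fun r => exists_tail (ρ r) (ψt r) (hψc r)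
    (ε := ε / 3 / n) (by positivity)).exists
  have hK : ∀ t, ∃ K : Set (S t), IsCompact K ∧ (ρ t).real Kᶜ ≤ ε / 3 / n / (N + 1) := by
    intro t
    obtain ⟨K, hK, h⟩ := isTightMeasureSet_iff_exists_isCompact_measure_compl_le.1
      (isTightMeasureSet_singleton (μ := ρ t)) (ENNReal.ofReal (ε / 3 / n / (N + 1)))
      (ENNReal.ofReal_pos.2 (by positivity))
    exact ⟨K, hK, ENNReal.toReal_le_of_le_ofReal (by positivity) (h _ rfl)⟩
  choose K hK hKρ using hK
  refine ⟨univ.pi K, isCompact_univ_pi hK, fun f hf0 hf1 hfK => ?_⟩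
  obtain ⟨V, hV, hKV, hVf⟩ := exists_open_box K hK {s | f s < η}
    (isOpen_lt f.continuous continuous_const) fun s hs => by
      rw [mem_ofPred_eq, hfK s hs]; exact hη
  let : ∀ t, MetricSpace (S t) := fun t => TopologicalSpace.metrizableSpaceMetric (S t)
  have hχ : ∀ t, ∃ χ : S t →ᵇ ℝ, (∀ x, 0 ≤ χ x) ∧ (∀ x, χ x ≤ 1) ∧ (∀ x ∉ (K t)ᶜ, χ x = 0) ∧
      ∀ x ∉ V t, χ x = 1 := by
    intro t
    obtain ⟨g, hg0, hg1, hg⟩ := exists_continuous_zero_one_of_isClosed (hK t).isClosed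
      (hV t).isClosed_compl (disjoint_left.2 fun x hx hxV => hxV (hKV t hx))
    exact ⟨ofNormedAddCommGroup g g.continuous 1 fun x => by
      rw [Real.norm_of_nonneg (hg x).1]; exact (hg x).2, fun x => (hg x).1, fun x => (hg x).2,
      fun x hx => hg0 (not_not.1 hx), fun x hx => hg1 hx⟩
  choose χ hχ0 hχ1 hχK hχV using hχ
  have hθ : ∀ r, ∃ θ : S r →ᵇ ℝ, (∀ x, 0 ≤ θ x) ∧ (∀ x, θ x ≤ 1) ∧
      (∀ x ∉ {x | (N : ℝ) < ψt r x}, θ x = 0) ∧ ∀ x, (N : ℝ) + 1 ≤ ψt r x → θ x = 1 := by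
    intro r
    let g : S r → ℝ := fun x => min 1 (max 0 (ψt r x - N))
    have h0 : ∀ x, 0 ≤ g x := fun x => le_min zero_le_one (le_max_left _ _)
    have h1 : ∀ x, g x ≤ 1 := fun x => min_le_left _ _
    refine ⟨ofNormedAddCommGroup g
      (continuous_const.min (continuous_const.max ((hψc r).sub continuous_const))) 1 fun x => by
        rw [Real.norm_of_nonneg (h0 x)]; exact h1 x, h0, h1, fun x hx => ?_, fun x hx => ?_⟩
    · have : ψt r x ≤ N := not_lt.1 hx
      simp [g, this]
    · have : 1 ≤ ψt r x - N := by linarith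
      simp [g, this]
  choose θ hθ0 hθ1 hθN hθ2 using hθ
  let B : (∀ t, S t) →ᵇ ℝ := η • const _ 1 + ∑ t, ∑ r,
    (((N : ℝ) + 1) • wpull ψt hψc hψ1 t (χ t) + wpull ψt hψc hψ1 r (θ r))
  have hterm : ∀ t r s, ψt r (s r) / psiS ψt s * χ t (s t) ≤
      ((N : ℝ) + 1) * wpull ψt hψc hψ1 t (χ t) s + wpull ψt hψc hψ1 r (θ r) s := by
    intro t r s
    rw [wpull_apply, wpull_apply]
    have hpos := psiS_pos ψt hψ1 s
    have key : ψt r (s r) * χ t (s t) ≤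
        (N + 1) * (ψt t (s t) * χ t (s t)) + ψt r (s r) * θ r (s r) := by
      have ht := hψ1 t (s t)
      have hr := hψ1 r (s r)
      have hc0 := hχ0 t (s t)
      have hc1 := hχ1 t (s t)
      have hN0 : (0 : ℝ) ≤ N := N.cast_nonneg
      have a0 : 0 ≤ ψt t (s t) * χ t (s t) := by positivity
      rcases le_total (ψt r (s r)) (N + 1) with h | h
      · have h1 : ψt r (s r) * χ t (s t) ≤ (N + 1) * χ t (s t) :=
          mul_le_mul_of_nonneg_right h hc0
        have h2 : χ t (s t) ≤ ψt t (s t) * χ t (s t) := le_mul_of_one_le_left hc0 ht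
        have h3 : 0 ≤ ψt r (s r) * θ r (s r) := mul_nonneg (by linarith) (hθ0 r _)
        nlinarith
      · rw [hθ2 r _ h]
        nlinarith
    calc _ = (ψt r (s r) * χ t (s t)) / psiS ψt s := by ring
      _ ≤ _ := div_le_div_of_nonneg_right key hpos.le
      _ = _ := by ring
  have hfB : ∀ s, f s ≤ B s := by
    intro s
    have hB : B s = η + ∑ t, ∑ r, (((N : ℝ) + 1) * wpull ψt hψc hψ1 t (χ t) s
        + wpull ψt hψc hψ1 r (θ r) s) := by
      simp [B, BoundedContinuousFunction.coe_sum]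
    have hsum : ∑ t, χ t (s t) ≤ ∑ t, ∑ r, (((N : ℝ) + 1) * wpull ψt hψc hψ1 t (χ t) s
        + wpull ψt hψc hψ1 r (θ r) s) := by
      refine Finset.sum_le_sum fun t _ => ?_
      calc χ t (s t) = ∑ r, ψt r (s r) / psiS ψt s * χ t (s t) := by
            rw [← Finset.sum_mul, ← Finset.sum_div]
            change _ = psiS ψt s / psiS ψt s * _
            rw [div_self (psiS_pos ψt hψ1 s).ne', one_mul]
        _ ≤ _ := Finset.sum_le_sum fun r _ => hterm t r s
    rw [hB]
    by_cases hs : s ∈ univ.pi V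
    · have h1 : f s < η := hVf hs
      have h2 : 0 ≤ ∑ t, χ t (s t) := Finset.sum_nonneg fun t _ => hχ0 t _
      linarith
    · obtain ⟨t, ht⟩ : ∃ t, s t ∉ V t := by simpa [Set.mem_pi] using hs
      have h2 : χ t (s t) ≤ ∑ t, χ t (s t) :=
        Finset.single_le_sum (f := fun t => χ t (s t)) (fun t _ => hχ0 t _) (Finset.mem_univ t)
      rw [hχV t _ ht] at h2
      linarith [hf1 s]
  have hΛB : Λ B ≤ ε / 3 + ∑ _t : Fin (T + 1), ∑ _r : Fin (T + 1), (ε / 3 / n + ε / 3 / n) := by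
    simp only [B, map_add, map_sum, map_smul, smul_eq_mul]
    refine add_le_add hη1 (Finset.sum_le_sum fun t _ => Finset.sum_le_sum fun r _ =>
      add_le_add ?_ ?_)
    · have h1 := (hρ t (χ t) (hχ0 t)).trans ((integral_le_measureReal (ρ t) (χ t)
        (hK t).isClosed.measurableSet.compl (hχ1 t) (hχK t)).trans (hKρ t))
      rw [le_div_iff₀ (by positivity)] at h1
      linarith
    · exact (hρ r (θ r) (hθ0 r)).trans ((integral_le_measureReal (ρ r) (θ r)
        (measurableSet_lt measurable_const (hψc r).measurable) (hθ1 r) (hθN r)).trans (hN r).le)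
  refine (hmono f B hfB).trans (hΛB.trans (le_of_eq ?_))
  simp only [Finset.sum_const, Finset.card_univ, Fintype.card_fin, nsmul_eq_mul]
  push_cast
  simp only [n]
  field_simp
  ring

/-! ### Signed measures and weights -/

/-- A weight integrable for `|m|` turns a signed measure into a finite measure dominating the
functional `g ↦ ∫ ψ g dm` on nonnegative functions. -/
lemma exists_dominating_measure {X : Type*} [TopologicalSpace X] [MeasurableSpace X]
    [BorelSpace X] (m : SignedMeasure X) (ψ : X → ℝ) (hψ : Continuous ψ) (hψ1 : ∀ x, 1 ≤ ψ x)
    (hm : Integrable ψ m.totalVariation) :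
    ∃ ρ : Measure X, IsFiniteMeasure ρ ∧ ∀ g : X →ᵇ ℝ, (∀ x, 0 ≤ g x) →
      sInt m (fun x => ψ x * g x) ≤ ∫ x, g x ∂ρ := by
  refine ⟨m.totalVariation.withDensity fun x => ENNReal.ofReal (ψ x),
    isFiniteMeasure_withDensity_ofReal hm.2, fun g hg => ?_⟩
  have hψ0 : ∀ x, 0 ≤ ψ x := fun x => zero_le_one.trans (hψ1 x)
  rw [integral_withDensity_eq_integral_toReal_smul hψ.measurable.ennreal_ofReal
    (ae_of_all _ fun x => ENNReal.ofReal_lt_top)]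
  simp only [ENNReal.toReal_ofReal (hψ0 _), smul_eq_mul]
  have hi : Integrable (fun x => ψ x * g x) m.totalVariation :=
    hm.mul_bdd (c := ‖g‖) g.continuous.measurable.aestronglyMeasurable
      (ae_of_all _ g.norm_coe_le_norm)
  unfold SignedMeasure.totalVariation at hi ⊢
  rw [integral_add_measure (hi.left_of_add_measure) (hi.right_of_add_measure)]
  have : 0 ≤ ∫ x, ψ x * g x ∂m.toJordanDecomposition.negPart :=
    integral_nonneg fun x => mul_nonneg (hψ0 x) (hg x)
  unfold sInt
  linarith

/-- Dividing a finite measure by the weight `ψ ≥ 1` yields a signed measure integrating `ψ`. -/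
lemma exists_signed_of_measure {X : Type*} [TopologicalSpace X] [MeasurableSpace X]
    [BorelSpace X] (ν : Measure X) [IsFiniteMeasure ν] (ψ : X → ℝ) (hψ : Continuous ψ)
    (hψ1 : ∀ x, 1 ≤ ψ x) :
    ∃ m : SignedMeasure X, Integrable ψ m.totalVariation ∧
      ∀ g : X → ℝ, sInt m (fun x => ψ x * g x) = ∫ x, g x ∂ν := by
  have hψ0 : ∀ x, 0 < ψ x := fun x => zero_lt_one.trans_le (hψ1 x)
  have hmeas : Measurable fun x => ENNReal.ofReal (ψ x)⁻¹ := hψ.measurable.inv.ennreal_ofReal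
  let μ := ν.withDensity fun x => ENNReal.ofReal (ψ x)⁻¹
  have hint : Integrable (fun x => (ψ x)⁻¹) ν :=
    (integrable_const (1 : ℝ)).mono' hψ.measurable.inv.aestronglyMeasurable
      (ae_of_all _ fun x => by
        rw [Real.norm_of_nonneg (inv_nonneg.2 (hψ0 x).le)]; exact inv_le_one_of_one_le₀ (hψ1 x))
  have : IsFiniteMeasure μ := isFiniteMeasure_withDensity_ofReal hint.2
  have hj : μ.toSignedMeasure.toJordanDecomposition =
      ⟨μ, 0, Measure.MutuallySingular.zero_right⟩ :=
    SignedMeasure.toJordanDecomposition_eq (by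
      simp [JordanDecomposition.toSignedMeasure])
  have hμ : ∀ g : X → ℝ, ∫ x, g x ∂μ = ∫ x, (ψ x)⁻¹ * g x ∂ν := fun g => by
    rw [integral_withDensity_eq_integral_toReal_smul hmeas
      (ae_of_all _ fun x => ENNReal.ofReal_lt_top)]
    simp only [ENNReal.toReal_ofReal (inv_nonneg.2 (hψ0 _).le), smul_eq_mul]
  refine ⟨μ.toSignedMeasure, ?_, fun g => ?_⟩
  · rw [SignedMeasure.totalVariation, hj]
    simp only [add_zero]
    rw [integrable_withDensity_iff_integrable_smul' hmeas
      (ae_of_all _ fun x => ENNReal.ofReal_lt_top)]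
    refine (integrable_const (1 : ℝ)).congr (ae_of_all _ fun x => ?_)
    simp [ENNReal.toReal_ofReal (inv_nonneg.2 (hψ0 x).le), (hψ0 x).ne']
  · rw [sInt, hj]
    simp only [integral_zero_measure, sub_zero]
    rw [hμ]
    exact integral_congr_ae (ae_of_all _ fun x => by
      simp [(hψ0 x).ne'])

/-! ### Marginals and conjugates -/

/-- The map `x_t ↦ x_t ∘ π_t` as a continuous linear map `C_t → C`. -/
def embedL (ψt : ∀ t, S t → ℝ) (hψc : ∀ t, Continuous (ψt t)) (hψ1 : ∀ t st, 1 ≤ ψt t st)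
    (t : Fin (T + 1)) : (S t →ᵇ (Fin d → ℝ)) →L[ℝ] ((∀ t, S t) →ᵇ (Fin d → ℝ)) :=
  LinearMap.mkContinuous
    { toFun := embedT ψt hψc hψ1 t
      map_add' := fun x y => by ext s i; simp [embedT]
      map_smul' := fun c x => by ext s i; simp [embedT, mul_left_comm] }
    1 fun x => by
      rw [one_mul]
      refine (norm_le (norm_nonneg x)).2 fun s => ?_
      have hpos := psiS_pos ψt hψ1 s
      have h0 : 0 ≤ ψt t (s t) / psiS ψt s := div_nonneg (zero_le_one.trans (hψ1 t _)) hpos.le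
      change ‖(ψt t (s t) / psiS ψt s) • x (s t)‖ ≤ ‖x‖
      rw [norm_smul, Real.norm_of_nonneg h0]
      exact (mul_le_of_le_one_left (norm_nonneg _)
        ((div_le_one hpos).2 (psiS_ge ψt hψ1 t s))).trans (x.norm_coe_le_norm _)

/-- The marginal `λ_t` of `λ ∈ C*`, that is `⟨x, λ_t⟩ = ⟨x ∘ π_t, λ⟩`. -/
def marginal (ψt : ∀ t, S t → ℝ) (hψc : ∀ t, Continuous (ψt t)) (hψ1 : ∀ t st, 1 ≤ ψt t st)
    (lam : WeakDual ℝ ((∀ t, S t) →ᵇ (Fin d → ℝ))) (t : Fin (T + 1)) :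
    WeakDual ℝ (S t →ᵇ (Fin d → ℝ)) :=
  StrongDual.toWeakDual ((WeakDual.toStrongDual lam).comp (embedL ψt hψc hψ1 t))

lemma marginal_apply (ψt : ∀ t, S t → ℝ) (hψc : ∀ t, Continuous (ψt t))
    (hψ1 : ∀ t st, 1 ≤ ψt t st) (lam : WeakDual ℝ ((∀ t, S t) →ᵇ (Fin d → ℝ)))
    (t : Fin (T + 1)) (x : S t →ᵇ (Fin d → ℝ)) :
    marginal ψt hψc hψ1 lam t x = lam (embedT ψt hψc hψ1 t x) := rfl

lemma ereal_coe_sum {ι : Type*} (s : Finset ι) (f : ι → ℝ) :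
    ((∑ i ∈ s, f i : ℝ) : EReal) = ∑ i ∈ s, (f i : EReal) :=
  map_sum (⟨⟨Real.toEReal, EReal.coe_zero⟩, EReal.coe_add⟩ : ℝ →+ EReal) f s

/-- The part of `φ*(λ) = ∑ G_t*(λ_t) + H*(λ)` that is needed: finiteness of `φ*(λ)` forces
finiteness of each `G_t*(λ_t)`. -/
lemma conj_marginal_ne_top (ψt : ∀ t, S t → ℝ) (hψc : ∀ t, Continuous (ψt t))
    (hψ1 : ∀ t st, 1 ≤ ψt t st) (G : ∀ t, (S t →ᵇ (Fin d → ℝ)) → EReal)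
    (hG : ∀ t, EProper (G t)) (H : ((∀ t, S t) →ᵇ (Fin d → ℝ)) → EReal) (hH : EProper H)
    (lam : WeakDual ℝ ((∀ t, S t) →ᵇ (Fin d → ℝ)))
    (hlam : (⨆ u, (((lam u : ℝ) : EReal) - ⨅ x : ∀ t, S t →ᵇ (Fin d → ℝ),
      ((∑ t, G t (x t)) + H (u - ∑ t, embedT ψt hψc hψ1 t (x t))))) ≠ ⊤) (t : Fin (T + 1)) :
    (⨆ x, (((marginal ψt hψc hψ1 lam t x : ℝ) : EReal) - G t x)) ≠ ⊤ := by
  classical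
  obtain ⟨K, hK⟩ : ∃ K : ℝ, (⨆ u, (((lam u : ℝ) : EReal) - ⨅ x : ∀ t, S t →ᵇ (Fin d → ℝ),
      ((∑ t, G t (x t)) + H (u - ∑ t, embedT ψt hψc hψ1 t (x t))))) ≤ (K : EReal) :=
    ⟨_, EReal.le_coe_toReal hlam⟩
  -- The Fenchel inequality at every point where the objective is finite.
  have hfen : ∀ (x : ∀ t, S t →ᵇ (Fin d → ℝ)) (w : (∀ t, S t) →ᵇ (Fin d → ℝ)),
      (∀ r, G r (x r) ≠ ⊤) → H w ≠ ⊤ →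
      lam w + ∑ r, lam (embedT ψt hψc hψ1 r (x r)) ≤ K + (∑ r, (G r (x r)).toReal + (H w).toReal)
      := by
    intro x w hx hw
    have h1 := (le_iSup (fun u => (((lam u : ℝ) : EReal) - ⨅ x : ∀ t, S t →ᵇ (Fin d → ℝ),
      ((∑ t, G t (x t)) + H (u - ∑ t, embedT ψt hψc hψ1 t (x t)))))
      (w + ∑ t, embedT ψt hψc hψ1 t (x t))).trans hK
    have h2 := (EReal.sub_le_sub le_rfl (iInf_le _ x)).trans h1
    rw [add_sub_cancel_right] at h2
    have h3 : ∑ r, G r (x r) = ((∑ r, (G r (x r)).toReal : ℝ) : EReal) := by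
      rw [ereal_coe_sum]
      exact Finset.sum_congr rfl fun r _ => (EReal.coe_toReal (hx r) ((hG r).2 _)).symm
    rw [h3, ← EReal.coe_toReal hw (hH.2 w), ← EReal.coe_add, ← EReal.coe_sub,
      EReal.coe_le_coe_iff, map_add, map_sum] at h2
    linarith
  choose x₀ hx₀ using fun r => (hG r).1
  obtain ⟨w₀, hw₀⟩ := hH.1
  refine ne_top_of_le_ne_top (EReal.coe_ne_top (K + (H w₀).toReal - lam w₀ +
    ∑ r ∈ Finset.univ.erase t,
      ((G r (x₀ r)).toReal - lam (embedT ψt hψc hψ1 r (x₀ r))))) (iSup_le fun x => ?_)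
  by_cases hx : G t x = ⊤
  · rw [hx, EReal.sub_top]; exact bot_le
  have hsplit : ∀ F : ∀ r, (S r →ᵇ (Fin d → ℝ)) → ℝ, ∑ r, F r (Function.update x₀ t x r) =
      F t x + ∑ r ∈ Finset.univ.erase t, F r (x₀ r) := fun F => by
    rw [← Finset.add_sum_erase _ _ (Finset.mem_univ t), Function.update_self]
    congr 1
    exact Finset.sum_congr rfl fun r hr => by
      rw [Function.update_of_ne (Finset.ne_of_mem_erase hr)]
  have h := hfen (Function.update x₀ t x) w₀ (fun r => by
    by_cases hr : r = t
    · subst hr; simpa using hx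
    · rw [Function.update_of_ne hr]; exact hx₀ r) hw₀
  rw [hsplit fun r y => lam (embedT ψt hψc hψ1 r y), hsplit fun r y => (G r y).toReal] at h
  rw [← EReal.coe_toReal hx ((hG t).2 x), ← EReal.coe_sub, EReal.coe_le_coe_iff, marginal_apply,
    Finset.sum_sub_distrib]
  linarith

end Helpers

noncomputable section

open MeasureTheory Filter Set BoundedContinuousFunction
open scoped ENNReal

/-- **Lemma (dual elements with finite conjugate value are measures).**
Let `C` be the weighted space of continuous `ℝ^d`-valued functions on the product
`S = S₀ × ⋯ × S_T` of Polish spaces (an element `u` of `C` being represented by the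
bounded continuous function `u/ψ`), with norm dual `C*`, and similarly for `C_t`.  Let
`φ` be the optimum value function of problem (P), built from proper convex functions
`G_t` on `C_t` and `H` on `C`, and `φ*` its conjugate on `C*`.  If
`dom φ* ⊆ C*_+` (every `λ` with `φ*(λ) < ∞` is a nonnegative functional) and
`dom G_t* ⊆ M_t` for every `t` (every `θ ∈ C_t*` with `G_t*(θ) < ∞` is represented by
an `ℝ^d`-valued Borel measure integrating `ψ_t`), then `dom φ* ⊆ M`: every
`λ ∈ C*` with `φ*(λ) < ∞` is represented by an `ℝ^d`-valued Borel measure on `S`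
integrating `ψ`. -/
theorem stmt0
    {T d : ℕ} (S : Fin (T + 1) → Type*)
    [∀ t, TopologicalSpace (S t)] [∀ t, PolishSpace (S t)]
    [∀ t, MeasurableSpace (S t)] [∀ t, BorelSpace (S t)]
    (ψt : ∀ t, S t → ℝ) (hψc : ∀ t, Continuous (ψt t)) (hψ1 : ∀ t st, 1 ≤ ψt t st)
    -- the proper convex functions `G_t` and `H`
    (G : ∀ t, (S t →ᵇ (Fin d → ℝ)) → EReal)
    (hGconv : ∀ t, EConvexOn (G t)) (hGproper : ∀ t, EProper (G t))
    (H : ((∀ t, S t) →ᵇ (Fin d → ℝ)) → EReal)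
    (hHconv : EConvexOn H) (hHproper : EProper H)
    -- the value function `φ` of problem (P) and the conjugates `φ*` and `G_t*`
    (φ : ((∀ t, S t) →ᵇ (Fin d → ℝ)) → EReal)
    (hφ : φ = fun u => ⨅ x : ∀ t, S t →ᵇ (Fin d → ℝ),
      ((∑ t, G t (x t)) + H (u - ∑ t, embedT ψt hψc hψ1 t (x t))))
    (φs : WeakDual ℝ ((∀ t, S t) →ᵇ (Fin d → ℝ)) → EReal)
    (hφs : φs = fun lam => ⨆ u, (((lam u : ℝ) : EReal) - φ u))
    (Gs : ∀ t, WeakDual ℝ (S t →ᵇ (Fin d → ℝ)) → EReal)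
    (hGs : Gs = fun t θ => ⨆ x, (((θ x : ℝ) : EReal) - G t x))
    -- `dom φ* ⊆ C*_+`
    (hpos : ∀ lam, φs lam ≠ ⊤ →
      ∀ u : (∀ t, S t) →ᵇ (Fin d → ℝ), (∀ s i, 0 ≤ u s i) → 0 ≤ lam u)
    -- `dom G_t* ⊆ M_t`
    (hdomG : ∀ t, ∀ θ, Gs t θ ≠ ⊤ →
      ∃ m : Fin d → SignedMeasure (S t),
        (∀ i, Integrable (ψt t) (m i).totalVariation) ∧
        ∀ x : S t →ᵇ (Fin d → ℝ), θ x = ∑ i, sInt (m i) (fun st => ψt t st * x st i)) :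
    -- conclusion: `dom φ* ⊆ M`
    ∀ lam, φs lam ≠ ⊤ →
      ∃ m : Fin d → SignedMeasure (∀ t, S t),
        (∀ i, Integrable (psiS ψt) (m i).totalVariation) ∧
        ∀ u : (∀ t, S t) →ᵇ (Fin d → ℝ),
          lam u = ∑ i, sInt (m i) (fun s => psiS ψt s * u s i) := by
  intro lam hlam
  classical
  subst hφ hφs hGs
  rcases isEmpty_or_nonempty (∀ t, S t) with hS | hS
  · refine ⟨fun _ => 0, fun i => ?_, fun u => ?_⟩
    · rw [SignedMeasure.totalVariation_zero]; exact integrable_zero_measure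
    · have hu : u = 0 := by ext s; exact isEmptyElim s
      simp [hu, sInt]
  -- The `i`-th component `f ↦ λ(f e_i)` of `λ`.
  let e : ∀ (i : Fin d) (X : Type _) [TopologicalSpace X], (X →ᵇ ℝ) →L[ℝ] (X →ᵇ (Fin d → ℝ)) :=
    fun i X _ => (ContinuousLinearMap.single ℝ (fun _ : Fin d => ℝ) i).compLeftContinuousBounded X
  let Λ : Fin d → ((∀ t, S t) →ᵇ ℝ) →ₗ[ℝ] ℝ := fun i =>
    ((WeakDual.toStrongDual lam).comp (e i (∀ t, S t))).toLinearMap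
  have hΛ : ∀ i (f : (∀ t, S t) →ᵇ ℝ), (∀ x, 0 ≤ f x) → 0 ≤ Λ i f := fun i f hf =>
    hpos lam hlam _ fun s j => by
      change 0 ≤ (Pi.single i (f s) : Fin d → ℝ) j
      by_cases h : j = i
      · subst h; simpa using hf s
      · simp [h]
  have hdom : ∀ i t, ∃ ρ : Measure (S t), IsFiniteMeasure ρ ∧ ∀ g : S t →ᵇ ℝ, (∀ x, 0 ≤ g x) →
      Λ i (wpull ψt hψc hψ1 t g) ≤ ∫ x, g x ∂ρ := by
    intro i t
    obtain ⟨m, hm, hmθ⟩ := hdomG t (marginal ψt hψc hψ1 lam t)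
      (conj_marginal_ne_top ψt hψc hψ1 G hGproper H hHproper lam hlam t)
    obtain ⟨ρ, hρ, hρg⟩ := exists_dominating_measure (m i) (ψt t) (hψc t) (hψ1 t) (hm i)
    refine ⟨ρ, hρ, fun g hg => ?_⟩
    have h1 : Λ i (wpull ψt hψc hψ1 t g) = marginal ψt hψc hψ1 lam t (e i (S t) g) := by
      change lam (e i _ (wpull ψt hψc hψ1 t g)) = lam (embedT ψt hψc hψ1 t (e i _ g))
      congr 1
      ext s j
      change (Pi.single i (ψt t (s t) / psiS ψt s * g (s t)) : Fin d → ℝ) j =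
        ψt t (s t) / psiS ψt s * (Pi.single i (g (s t)) : Fin d → ℝ) j
      by_cases h : j = i
      · subst h; simp
      · simp [h]
    rw [h1, hmθ, Finset.sum_eq_single i]
    · have : ∀ st, e i (S t) g st i = g st := fun st => Pi.single_eq_same (M := fun _ => ℝ) i (g st)
      simp only [this]
      exact hρg g hg
    · intro j _ hj
      have : ∀ st, e i (S t) g st j = 0 := fun st => Pi.single_eq_of_ne (M := fun _ => ℝ) hj (g st)
      simp [this, sInt]
    · simp
  choose ρ hρ hρΛ using hdom
  have hrep : ∀ i, ∃ m : SignedMeasure (∀ t, S t), Integrable (psiS ψt) m.totalVariation ∧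
      ∀ f : (∀ t, S t) →ᵇ ℝ, Λ i f = sInt m (fun s => psiS ψt s * f s) := by
    intro i
    let : ∀ t, MetricSpace (S t) := fun t => TopologicalSpace.metrizableSpaceMetric (S t)
    obtain ⟨ν, hν, hνf⟩ := exists_measure_of_tight (Λ i) (hΛ i)
      (tight_of_marginals ψt hψc hψ1 (Λ i) (hΛ i) (ρ i) (hρΛ i))
    obtain ⟨m, hm, hmf⟩ := exists_signed_of_measure ν (psiS ψt) (psiS_cont ψt hψc)
      fun s => (hψ1 0 (s 0)).trans (psiS_ge ψt hψ1 0 s)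
    exact ⟨m, hm, fun f => by rw [hmf, hνf]⟩
  choose m hm hmf using hrep
  refine ⟨m, hm, fun u => ?_⟩
  let c : Fin d → ((∀ t, S t) →ᵇ ℝ) := fun i =>
    (ContinuousLinearMap.proj (R := ℝ) (φ := fun _ : Fin d => ℝ) i).compLeftContinuousBounded _ u
  have hu : u = ∑ i, e i _ (c i) := by
    ext s j
    rw [BoundedContinuousFunction.coe_sum, Finset.sum_apply, Finset.sum_apply]
    change u s j = ∑ i, (Pi.single i (u s i) : Fin d → ℝ) j
    simp [Pi.single_apply]
  calc lam u = lam (∑ i, e i _ (c i)) := by rw [← hu]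
    _ = ∑ i, Λ i (c i) := map_sum lam _ _
    _ = _ := Finset.sum_congr rfl fun i _ => hmf i (c i)

end
end

section
/- Let d = 1, S_t = ℝ^n, ψ_t(s_t) = 1 + |s_t|, and let û : S → ℝ be upper semicontinuous with û ≤ Kψ for some K ∈ ℝ. Let H = δ_{C_û}, where C_û = {u ∈ C : ∃ z ∈ N with û(s) + u(s) ≤ Σ_{t=0}^{T−1} z_t(s^t)·(s_{t+1} − s_t) for all s}. Then for every λ ∈ M, the conjugate H*(λ) equals −∫_S û dλ if λ is a nonnegative martingale measure, and +∞ otherwise. -/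
/-!
Write `⟨λ, f⟩` for the integral of `f` against `λ`, and `Λ` for `⟨λ, ψ⟩`.

Since `û ≤ Kψ`, the set `C_û` (in terms of the functions `ψ u`) contains every ray
`-Kψ + a φ`, `a ≥ 0`, where `φ` is continuous of growth `ψ` and dominated by the gains of some
strategy. Hence `H*(λ) = ∞` as soon as `⟨λ, φ⟩ > 0` for one such `φ`.

* If `λ` is not nonnegative, `φ = -g` works for some nonnegative bounded continuous `g`: if
  `⟨λ, g⟩ ≥ 0` held for all of these, approximating indicators of closed sets from above would
  give `λ⁻ F ≤ λ⁺ F` for closed `F`, hence for all measurable sets by inner regularity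
  (`nonneg_of_forall_bcf`).
* If `λ ≥ 0` is not a martingale measure, `φ` is plus or minus the gains of a *continuous*
  strategy `g (s^t)` in one asset and one period. If all of those had zero integral, the images
  under `s ↦ s^t` of the positive and negative parts of the signed measure
  `(s_{t+1,i} - s_{t,i}) λ` would agree on bounded continuous functions, hence be equal, so that
  bounded measurable strategies would have zero integral as well (`integral_gains_eq_zero`).

Let `λ` now be a nonnegative martingale measure. Integrating `û + ψ u ≤ gains` gives
`H*(λ) ≤ -⟨λ, û⟩`, which is trivial when `û` is not integrable, since then `⟨λ, û⟩ = -∞`.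
Conversely, `Kψ - û` is nonnegative and lower semicontinuous, hence the limit of
bounded nonnegative continuous minorants `g_k` (`exists_bcf_tendsto_of_lsc`). Each `g_k - Kψ` lies
in `C_û`, with the zero strategy, so `⟨λ, g_k⟩ ≤ H*(λ) + KΛ`, and Fatou's lemma gives
`⟨λ, Kψ - û⟩ ≤ H*(λ) + KΛ`. If `H*(λ) < ∞`, this shows at once that `û` is integrable and that
`-⟨λ, û⟩ ≤ H*(λ)`.
-/

open MeasureTheory Filter Set
open scoped ENNReal

noncomputable section

open MeasureTheory Filter Set BoundedContinuousFunction
open scoped ENNReal Classical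

/-- A (bounded, adapted) trading strategy `z ∈ N`: each `z_t` is a bounded measurable
`ℝ^n`-valued function on `S = S^0 × ⋯ × S^T` depending only on `(s_0,…,s_t)`. -/
def IsStrategy {T n : ℕ} (z : Fin T → (Fin (T + 1) → Fin n → ℝ) → (Fin n → ℝ)) : Prop :=
  ∀ t, Measurable (z t) ∧ (∃ K : ℝ, ∀ s, ‖z t s‖ ≤ K) ∧
    ∀ s s' : Fin (T + 1) → Fin n → ℝ,
      (∀ r : Fin (T + 1), (r : ℕ) ≤ (t : ℕ) → s r = s' r) → z t s = z t s'

/-- The gain `∑_{t=0}^{T−1} z_t(s^t)·(s_{t+1} − s_t)` of a trading strategy. -/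
def gains {T n : ℕ} (z : Fin T → (Fin (T + 1) → Fin n → ℝ) → (Fin n → ℝ))
    (s : Fin (T + 1) → Fin n → ℝ) : ℝ :=
  ∑ t : Fin T, ∑ i, z t s i * (s t.succ i - s t.castSucc i)

/-- The weight `ψ(s) = ∑_t (1 + |s_t|)` on the path space. -/
def psiM {T n : ℕ} (s : Fin (T + 1) → Fin n → ℝ) : ℝ := ∑ t, (1 + ‖s t‖)

/-! ### Approximation by bounded continuous functions -/

/-- A nonnegative lower semicontinuous function on a metric space is the pointwise limit of
bounded nonnegative continuous minorants, namely the truncated inf-convolutions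
`x ↦ min k (inf_y (f y + k * dist x y))`. -/
lemma exists_bcf_tendsto_of_lsc {X : Type*} [PseudoMetricSpace X] {f : X → ℝ}
    (hf : LowerSemicontinuous f) (h0 : ∀ x, 0 ≤ f x) :
    ∃ g : ℕ → X →ᵇ ℝ, (∀ k x, 0 ≤ g k x) ∧ (∀ k x, g k x ≤ f x) ∧
      ∀ x, Tendsto (fun k => g k x) atTop (nhds (f x)) := by
  have hbdd : ∀ (k : ℕ) (x : X), BddBelow (Set.range fun y => f y + k * dist x y) := by
    intro k x
    refine ⟨0, ?_⟩
    rintro _ ⟨y, rfl⟩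
    have := h0 y
    positivity
  set m : ℕ → X → ℝ := fun k x => ⨅ y, (f y + k * dist x y) with hm
  have hm0 : ∀ k x, 0 ≤ m k x := by
    intro k x
    refine Real.iInf_nonneg fun y => ?_
    have := h0 y
    positivity
  have hmf : ∀ k x, m k x ≤ f x := by
    intro k x
    refine (ciInf_le (hbdd k x) x).trans ?_
    simp
  have hlip : ∀ k : ℕ, LipschitzWith (k : NNReal) (m k) := by
    intro k
    refine LipschitzWith.of_le_add_mul _ fun x y => ?_
    have : Nonempty X := ⟨x⟩
    rw [← sub_le_iff_le_add]
    refine le_ciInf fun w => ?_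
    have h1 := ciInf_le (hbdd k x) w
    have h2 : (k : ℝ) * dist x w ≤ k * dist x y + k * dist y w := by
      rw [← mul_add]
      exact mul_le_mul_of_nonneg_left (dist_triangle _ _ _) (Nat.cast_nonneg k)
    simp only [hm, NNReal.coe_natCast] at h1 ⊢
    linarith
  have hc : ∀ k : ℕ, Continuous fun x => min (k : ℝ) (m k x) := fun k =>
    continuous_const.min (hlip k).continuous
  refine ⟨fun k => BoundedContinuousFunction.ofNormedAddCommGroup (fun x => min (k : ℝ) (m k x))
    (hc k) k ?_, ?_, ?_, ?_⟩
  · intro x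
    rw [Real.norm_eq_abs, abs_of_nonneg (le_min (Nat.cast_nonneg k) (hm0 k x))]
    exact min_le_left _ _
  · intro k x
    exact le_min (Nat.cast_nonneg k) (hm0 k x)
  · intro k x
    exact (min_le_right _ _).trans (hmf k x)
  · intro x
    refine tendsto_order.2 ⟨fun a ha => ?_, fun a ha => Eventually.of_forall fun k =>
      lt_of_le_of_lt ((min_le_right _ _).trans (hmf k x)) ha⟩
    obtain ⟨b, hab, hb⟩ := exists_between ha
    obtain ⟨δ, hδ, hball⟩ := Metric.eventually_nhds_iff.1 (hf x b hb)
    have : Nonempty X := ⟨x⟩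
    obtain ⟨k₀, hk₀⟩ := exists_nat_ge (max b (b / δ))
    filter_upwards [eventually_ge_atTop k₀] with k hk
    have hk' : max b (b / δ) ≤ (k : ℝ) := hk₀.trans (by exact_mod_cast hk)
    refine lt_of_lt_of_le hab (le_min ((le_max_left _ _).trans hk') (le_ciInf fun y => ?_))
    by_cases hy : dist y x < δ
    · have := hball hy
      have : (0 : ℝ) ≤ k * dist x y := by positivity
      linarith
    · rw [not_lt, dist_comm] at hy
      have h1 : b ≤ k * δ := (div_le_iff₀ hδ).1 ((le_max_right _ _).trans hk')
      have h2 : (k : ℝ) * δ ≤ k * dist x y := mul_le_mul_of_nonneg_left hy (Nat.cast_nonneg k)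
      have := h0 y
      linarith

/-- A finite measure is determined by its integrals of bounded continuous functions; applied to
the images under `p` of the two parts of the signed density `D`, this extends a
vanishing identity from continuous to bounded measurable integrands. -/
lemma integral_comp_mul_eq_zero_of_bcf {X : Type*} [PseudoMetricSpace X] [MeasurableSpace X]
    [BorelSpace X] {μ : Measure X} {D : X → ℝ} (hDm : Measurable D) (hD : Integrable D μ)
    {p : X → X} (hp : Measurable p)
    (h : ∀ g : X →ᵇ ℝ, ∫ s, g (p s) * D s ∂μ = 0)
    {f : X → ℝ} (hf : Measurable f) {C : ℝ} (hC : ∀ s, |f s| ≤ C) :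
    ∫ s, f (p s) * D s ∂μ = 0 := by
  set ν : (X → ℝ) → Measure X := fun D => (μ.withDensity fun s => ENNReal.ofReal (D s)).map p
    with hν
  have hfin : ∀ E : X → ℝ, Integrable E μ → IsFiniteMeasure (ν E) := by
    intro E hE
    have := isFiniteMeasure_withDensity_ofReal hE.2
    infer_instance
  have hint : ∀ E : X → ℝ, Measurable E → ∀ φ : X → ℝ, Measurable φ →
      ∫ s, φ s ∂(ν E) = ∫ s, φ (p s) * max (E s) 0 ∂μ := by
    intro E hE φ hφ
    rw [hν]
    simp only
    rw [integral_map hp.aemeasurable hφ.aestronglyMeasurable,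
      integral_withDensity_eq_integral_toReal_smul (by fun_prop)
        (Eventually.of_forall fun _ => ENNReal.ofReal_lt_top)]
    refine integral_congr_ae (Eventually.of_forall fun s => ?_)
    simp only [ENNReal.toReal_ofReal', smul_eq_mul]
    ring
  have hintg : ∀ E : X → ℝ, Integrable E μ → ∀ φ : X → ℝ, Measurable φ → ∀ C : ℝ,
      (∀ s, |φ s| ≤ C) → Integrable (fun s => φ (p s) * max (E s) 0) μ := by
    intro E hE φ hφ C hC
    refine hE.pos_part.bdd_mul (c := C) (hφ.comp hp).aestronglyMeasurable
      (Eventually.of_forall fun s => hC _)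
  have key : ∀ φ : X → ℝ, Measurable φ → ∀ C : ℝ, (∀ s, |φ s| ≤ C) →
      ∫ s, φ (p s) * D s ∂μ = ∫ s, φ s ∂(ν D) - ∫ s, φ s ∂(ν (-D)) := by
    intro φ hφ C hC
    rw [hint D hDm φ hφ, hint (-D) hDm.neg φ hφ,
      ← integral_sub (hintg D hD φ hφ C hC) (hintg (-D) hD.neg φ hφ C hC)]
    refine integral_congr_ae (Eventually.of_forall fun s => ?_)
    simp only [Pi.neg_apply]
    rcases le_total (D s) 0 with h | h
    · rw [max_eq_right h, max_eq_left (by linarith)]; ring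
    · rw [max_eq_left h, max_eq_right (by linarith)]; ring
  have := hfin D hD
  have := hfin (-D) hD.neg
  have heq : ν D = ν (-D) := by
    refine ext_of_forall_integral_eq_of_IsFiniteMeasure fun g => ?_
    have := key g g.continuous.measurable ‖g‖ fun s => g.norm_coe_le_norm s
    rw [h g] at this
    linarith
  rw [key f hf C hC, heq, sub_self]

/-- Signed measures whose integrals of nonnegative bounded continuous functions are nonnegative
are nonnegative. -/
lemma nonneg_of_forall_bcf {X : Type*} [PseudoMetricSpace X] [MeasurableSpace X]
    [BorelSpace X] (m : SignedMeasure X)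
    (h : ∀ g : X →ᵇ ℝ, (∀ s, 0 ≤ g s) → 0 ≤ sInt m g) : 0 ≤ m := by
  set P := m.toJordanDecomposition.posPart with hP
  set N := m.toJordanDecomposition.negPart with hN
  have hclosed : ∀ F : Set X, IsClosed F → N.real F ≤ P.real F := by
    intro F hF
    obtain ⟨δ, -, hδ, hδ0⟩ := exists_seq_strictAnti_tendsto (0 : ℝ)
    refine le_of_tendsto_of_tendsto'
      (tendsto_integral_thickenedIndicator_of_isClosed N hF hδ hδ0)
      (tendsto_integral_thickenedIndicator_of_isClosed P hF hδ hδ0) fun k => ?_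
    have hb : ∀ s, ‖((thickenedIndicator (hδ k) F s : NNReal) : ℝ)‖ ≤ 1 := by
      intro s
      rw [Real.norm_eq_abs, NNReal.abs_eq]
      exact_mod_cast thickenedIndicator_le_one (hδ k) F s
    have := h (BoundedContinuousFunction.ofNormedAddCommGroup
      (fun s => ((thickenedIndicator (hδ k) F s : NNReal) : ℝ))
      (NNReal.continuous_coe.comp (thickenedIndicator (hδ k) F).continuous) 1 hb)
      (fun s => NNReal.coe_nonneg _)
    exact sub_nonneg.1 this
  intro A hA
  rw [FunLike.coe_zero, Pi.zero_apply, m.apply_eq_posPart_real_sub_negPart_real hA, sub_nonneg]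
  have : N A ≤ P A := by
    rw [hA.measure_eq_iSup_isClosed_of_ne_top (measure_ne_top N A)]
    refine iSup_le fun F => iSup_le fun hFA => iSup_le fun hF => ?_
    have h1 := hclosed F hF
    rw [measureReal_def, measureReal_def,
      ENNReal.toReal_le_toReal (measure_ne_top _ _) (measure_ne_top _ _)] at h1
    exact h1.trans (measure_mono hFA)
  exact ENNReal.toReal_mono (measure_ne_top _ _) this

/-! ### Signed and extended-valued integrals -/

lemma negPart_eq_zero_of_nonneg {X : Type*} [MeasurableSpace X] {m : SignedMeasure X}
    (h : 0 ≤ m) : m.toJordanDecomposition.negPart = 0 := by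
  obtain ⟨A, hA, h1, h2⟩ := m.toJordanDecomposition.mutuallySingular
  have h3 := h A hA
  rw [FunLike.coe_zero, Pi.zero_apply, m.apply_eq_posPart_real_sub_negPart_real hA,
    measureReal_def, h1, ENNReal.toReal_zero, zero_sub, Left.nonneg_neg_iff] at h3
  have h4 : m.toJordanDecomposition.negPart A = 0 :=
    (measureReal_eq_zero_iff).1 (le_antisymm h3 measureReal_nonneg)
  rw [← Measure.measure_univ_eq_zero, ← Set.union_compl_self A]
  exact measure_union_null h4 h2

lemma sInt_add_mul {X : Type*} [MeasurableSpace X] {m : SignedMeasure X} {f g : X → ℝ}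
    (hf : Integrable f m.totalVariation) (hg : Integrable g m.totalVariation) (a b : ℝ) :
    sInt m (fun s => a * f s + b * g s) = a * sInt m f + b * sInt m g := by
  rw [SignedMeasure.totalVariation, integrable_add_measure] at hf hg
  unfold sInt
  rw [integral_add (hf.1.const_mul a) (hg.1.const_mul b),
    integral_add (hf.2.const_mul a) (hg.2.const_mul b)]
  simp only [integral_const_mul]
  ring

lemma lintegral_posPart'_coe {X : Type*} [MeasurableSpace X] (μ : Measure X) (f : X → ℝ) :
    ∫⁻ s, ((f s : ℝ) : EReal).posPart' ∂μ = ∫⁻ s, ENNReal.ofReal (f s) ∂μ := by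
  simp [EReal.posPart']

lemma eInt_of_integrable {X : Type*} [MeasurableSpace X] {μ : Measure X} {f : X → ℝ}
    (hf : Integrable f μ) : eInt μ (fun s => ((f s : ℝ) : EReal)) = ((∫ s, f s ∂μ : ℝ) : EReal) := by
  have h1 : ∫⁻ s, ENNReal.ofReal (f s) ∂μ ≠ ⊤ := hf.lintegral_lt_top.ne
  have h2 : ∫⁻ s, ENNReal.ofReal (-f s) ∂μ ≠ ⊤ := hf.neg.lintegral_lt_top.ne
  have e1 := lintegral_posPart'_coe μ f
  have e2 := lintegral_posPart'_coe μ (fun s => -f s)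
  simp only [EReal.coe_neg] at e2
  unfold eInt
  rw [e1, e2, if_neg h1, integral_eq_lintegral_pos_part_sub_lintegral_neg_part hf, EReal.coe_sub,
    EReal.coe_ennreal_toReal h1, EReal.coe_ennreal_toReal h2]

lemma eInt_of_not_integrable {X : Type*} [MeasurableSpace X] {μ : Measure X} {f : X → ℝ}
    (hm : Measurable f) (h1 : ∫⁻ s, ENNReal.ofReal (f s) ∂μ ≠ ⊤) (hf : ¬ Integrable f μ) :
    eInt μ (fun s => ((f s : ℝ) : EReal)) = ⊥ := by
  have h2 : ∫⁻ s, ENNReal.ofReal (-f s) ∂μ = ⊤ := by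
    by_contra h2
    refine hf ⟨hm.aestronglyMeasurable, ?_⟩
    rw [hasFiniteIntegral_iff_norm]
    calc ∫⁻ s, ENNReal.ofReal ‖f s‖ ∂μ
        ≤ ∫⁻ s, (ENNReal.ofReal (f s) + ENNReal.ofReal (-f s)) ∂μ := by
          refine lintegral_mono fun s => ?_
          rcases le_total 0 (f s) with h | h
          · rw [Real.norm_of_nonneg h]; exact le_self_add
          · rw [Real.norm_of_nonpos h]; exact le_add_self
      _ = ∫⁻ s, ENNReal.ofReal (f s) ∂μ + ∫⁻ s, ENNReal.ofReal (-f s) ∂μ :=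
          lintegral_add_left (by fun_prop) _
      _ < ⊤ := ENNReal.add_lt_top.2 ⟨lt_top_iff_ne_top.2 h1, lt_top_iff_ne_top.2 h2⟩
  have e1 := lintegral_posPart'_coe μ f
  have e2 := lintegral_posPart'_coe μ (fun s => -f s)
  simp only [EReal.coe_neg] at e2
  unfold eInt
  rw [e1, e2, if_neg h1, h2, EReal.coe_ennreal_top, sub_eq_add_neg, EReal.neg_top, EReal.add_bot]

/-! ### Path space, strategies and gains -/

section PathSpace

variable {T n : ℕ}

lemma psiM_ge (s : Fin (T + 1) → Fin n → ℝ) (t : Fin (T + 1)) : 1 + ‖s t‖ ≤ psiM s :=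
  Finset.single_le_sum (f := fun t => 1 + ‖s t‖) (fun _ _ => by positivity) (Finset.mem_univ t)

lemma one_le_psiM (s : Fin (T + 1) → Fin n → ℝ) : 1 ≤ psiM s :=
  le_trans (by simp) (psiM_ge s 0)

lemma psiM_pos (s : Fin (T + 1) → Fin n → ℝ) : 0 < psiM s :=
  lt_of_lt_of_le one_pos (one_le_psiM s)

lemma continuous_psiM : Continuous (psiM (T := T) (n := n)) := by
  unfold psiM; fun_prop

/-- Continuous functions of growth `ψ` are the elements of `C`, that is, of the form `ψ u` with
`u` bounded continuous. -/
lemma exists_bcf_psiM_mul {φ : (Fin (T + 1) → Fin n → ℝ) → ℝ} (hφ : Continuous φ) {C : ℝ}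
    (hC : ∀ s, |φ s| ≤ C * psiM s) :
    ∃ w : (Fin (T + 1) → Fin n → ℝ) →ᵇ ℝ, ∀ s, psiM s * w s = φ s := by
  refine ⟨BoundedContinuousFunction.ofNormedAddCommGroup (fun s => φ s / psiM s)
    (hφ.div continuous_psiM fun s => (psiM_pos s).ne') C fun s => ?_, fun s => ?_⟩
  · rw [Real.norm_eq_abs, abs_div, abs_of_pos (psiM_pos s), div_le_iff₀ (psiM_pos s)]
    exact hC s
  · exact mul_div_cancel₀ _ (psiM_pos s).ne'

lemma abs_increment_le (s : Fin (T + 1) → Fin n → ℝ) (t : Fin T) (i : Fin n) :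
    |s t.succ i - s t.castSucc i| ≤ 2 * psiM s := by
  have h1 := psiM_ge s t.succ
  have h2 := psiM_ge s t.castSucc
  have h3 := norm_le_pi_norm (s t.succ) i
  have h4 := norm_le_pi_norm (s t.castSucc) i
  have h5 := abs_sub (s t.succ i) (s t.castSucc i)
  rw [Real.norm_eq_abs] at h3 h4
  linarith

lemma measurable_gains {z : Fin T → (Fin (T + 1) → Fin n → ℝ) → (Fin n → ℝ)}
    (hz : IsStrategy z) : Measurable (gains z) := by
  have := fun t => (hz t).1
  unfold gains
  fun_prop

lemma exists_gains_bound {z : Fin T → (Fin (T + 1) → Fin n → ℝ) → (Fin n → ℝ)}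
    (hz : IsStrategy z) : ∃ C, ∀ s, |gains z s| ≤ C * psiM s := by
  choose B hB using fun t => (hz t).2.1
  refine ⟨∑ t : Fin T, ∑ _i : Fin n, B t * 2, fun s => ?_⟩
  unfold gains
  rw [Finset.sum_mul]
  refine (Finset.abs_sum_le_sum_abs _ _).trans (Finset.sum_le_sum fun t _ => ?_)
  rw [Finset.sum_mul]
  refine (Finset.abs_sum_le_sum_abs _ _).trans (Finset.sum_le_sum fun i _ => ?_)
  rw [abs_mul, mul_assoc]
  exact mul_le_mul ((norm_le_pi_norm (z t s) i).trans (hB t s)) (abs_increment_le s t i)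
    (abs_nonneg _) ((norm_nonneg _).trans (hB t s))

lemma integrable_of_le_psiM {μ : Measure (Fin (T + 1) → Fin n → ℝ)} (hμ : Integrable psiM μ)
    {f : (Fin (T + 1) → Fin n → ℝ) → ℝ} (hf : Measurable f) {C : ℝ}
    (hC : ∀ s, |f s| ≤ C * psiM s) : Integrable f μ :=
  (hμ.const_mul C).mono' hf.aestronglyMeasurable (Eventually.of_forall hC)

lemma isStrategy_const_smul {z : Fin T → (Fin (T + 1) → Fin n → ℝ) → (Fin n → ℝ)}
    (hz : IsStrategy z) (a : ℝ) : IsStrategy fun t s => a • z t s := by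
  intro t
  obtain ⟨h1, ⟨B, hB⟩, h3⟩ := hz t
  refine ⟨h1.const_smul a, ⟨|a| * B, fun s => ?_⟩, fun s s' h => congrArg (a • ·) (h3 s s' h)⟩
  rw [norm_smul]
  exact mul_le_mul_of_nonneg_left (hB s) (abs_nonneg a)

lemma gains_const_smul (z : Fin T → (Fin (T + 1) → Fin n → ℝ) → (Fin n → ℝ)) (a : ℝ)
    (s : Fin (T + 1) → Fin n → ℝ) : gains (fun t s => a • z t s) s = a * gains z s := by
  simp only [gains, Finset.mul_sum, Pi.smul_apply, smul_eq_mul, mul_assoc]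

lemma isStrategy_zero :
    IsStrategy (0 : Fin T → (Fin (T + 1) → Fin n → ℝ) → (Fin n → ℝ)) :=
  fun _ => ⟨measurable_const, ⟨0, fun _ => by simp⟩, fun _ _ _ => rfl⟩

lemma gains_zero (s : Fin (T + 1) → Fin n → ℝ) :
    gains (0 : Fin T → (Fin (T + 1) → Fin n → ℝ) → (Fin n → ℝ)) s = 0 := by
  simp [gains]

/-- The projection of a path onto `S^t`, with `S^t` embedded in the path space by setting the
coordinates after time `t` to zero. -/
def stopPath (t : Fin T) (s : Fin (T + 1) → Fin n → ℝ) : Fin (T + 1) → Fin n → ℝ :=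
  fun r => if (r : ℕ) ≤ (t : ℕ) then s r else 0

lemma continuous_stopPath (t : Fin T) : Continuous (stopPath (n := n) t) := by
  refine continuous_pi fun r => ?_
  unfold stopPath
  split_ifs
  · exact continuous_apply r
  · exact continuous_const

lemma IsStrategy.apply_stopPath {z : Fin T → (Fin (T + 1) → Fin n → ℝ) → (Fin n → ℝ)}
    (hz : IsStrategy z) (t : Fin T) (s : Fin (T + 1) → Fin n → ℝ) :
    z t (stopPath t s) = z t s :=
  (hz t).2.2 _ _ fun r hr => by simp [stopPath, hr]

/-- The strategy trading only asset `i`, only in period `t`, in the amount `g (s^t)`. -/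
def elementary (t : Fin T) (i : Fin n) (g : (Fin (T + 1) → Fin n → ℝ) →ᵇ ℝ) :
    Fin T → (Fin (T + 1) → Fin n → ℝ) → (Fin n → ℝ) :=
  fun t' s => if t' = t then Pi.single i (g (stopPath t s)) else 0

lemma isStrategy_elementary (t : Fin T) (i : Fin n) (g : (Fin (T + 1) → Fin n → ℝ) →ᵇ ℝ) :
    IsStrategy (elementary t i g) := by
  intro t'
  unfold elementary
  split_ifs with h
  · subst h
    refine ⟨?_, ⟨‖g‖, fun s => ?_⟩, fun s s' hs => ?_⟩
    · exact ((continuous_single i).comp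
        (g.continuous.comp (continuous_stopPath t'))).measurable
    · rw [Pi.norm_single]
      exact g.norm_coe_le_norm _
    · have : stopPath t' s = stopPath t' s' := by
        funext r
        unfold stopPath
        split_ifs with hr
        · exact hs r hr
        · rfl
      simp only [this]
  · exact ⟨measurable_const, ⟨0, fun _ => by simp⟩, fun _ _ _ => rfl⟩

lemma gains_elementary (t : Fin T) (i : Fin n) (g : (Fin (T + 1) → Fin n → ℝ) →ᵇ ℝ)
    (s : Fin (T + 1) → Fin n → ℝ) :
    gains (elementary t i g) s = g (stopPath t s) * (s t.succ i - s t.castSucc i) := by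
  unfold gains elementary
  rw [Finset.sum_eq_single t (fun t' _ h => by simp [h]) (by simp)]
  rw [Finset.sum_eq_single i (fun j _ h => by simp [h]) (by simp)]
  simp

lemma continuous_gains_elementary (t : Fin T) (i : Fin n)
    (g : (Fin (T + 1) → Fin n → ℝ) →ᵇ ℝ) : Continuous (gains (elementary t i g)) := by
  have h := continuous_stopPath (n := n) t
  rw [show gains (elementary t i g) = _ from funext (gains_elementary t i g)]
  fun_prop

/-- The martingale property only has to be tested on continuous elementary strategies. -/
lemma integral_gains_eq_zero {μ : Measure (Fin (T + 1) → Fin n → ℝ)} (hμ : Integrable psiM μ)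
    (h : ∀ t i g, ∫ s, gains (elementary t i g) s ∂μ = 0)
    {z : Fin T → (Fin (T + 1) → Fin n → ℝ) → (Fin n → ℝ)} (hz : IsStrategy z) :
    ∫ s, gains z s ∂μ = 0 := by
  have hDm : ∀ (t : Fin T) (i : Fin n),
      Measurable fun s : Fin (T + 1) → Fin n → ℝ => s t.succ i - s t.castSucc i := by
    intro t i
    fun_prop
  have hD : ∀ (t : Fin T) (i : Fin n),
      Integrable (fun s : Fin (T + 1) → Fin n → ℝ => s t.succ i - s t.castSucc i) μ := fun t i =>
    integrable_of_le_psiM hμ (hDm t i) fun s => abs_increment_le s t i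
  have hzm : ∀ t i, Measurable fun s => z t s i := fun t i =>
    (measurable_pi_apply i).comp (hz t).1
  choose B hB using fun t => (hz t).2.1
  have hzB : ∀ t i s, |z t s i| ≤ B t := fun t i s =>
    (norm_le_pi_norm (z t s) i).trans (hB t s)
  have hint : ∀ t i, Integrable (fun s => z t s i * (s t.succ i - s t.castSucc i)) μ := fun t i =>
    (hD t i).bdd_mul (c := B t) (hzm t i).aestronglyMeasurable
      (Eventually.of_forall fun s => hzB t i s)
  unfold gains
  rw [integral_finsetSum _ fun t _ => integrable_finsetSum _ fun i _ => hint t i]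
  refine Finset.sum_eq_zero fun t _ => ?_
  rw [integral_finsetSum _ fun i _ => hint t i]
  refine Finset.sum_eq_zero fun i _ => ?_
  have := integral_comp_mul_eq_zero_of_bcf (hDm t i) (hD t i)
    (continuous_stopPath t).measurable
    (fun g => by simpa only [gains_elementary] using h t i g) (hzm t i) (hzB t i)
  simpa only [hz.apply_stopPath] using this

end PathSpace

/-! ### The conjugate -/

/-- **Lemma (conjugate of the superhedging indicator).**
Let `d = 1`, `S_t = ℝ^n`, `ψ_t(s_t) = 1 + |s_t|`, and let `û : S → ℝ` be upper
semicontinuous with `û ≤ Kψ`.  Let `H = δ_{C_û}` where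
`C_û = {u ∈ C : ∃ z ∈ N, û + u ≤ ∑_t z_t(s^t)·Δs_{t+1}}` (elements of `C` being
represented by the bounded continuous functions `u/ψ`).  Then for every `λ ∈ M`,
`H*(λ) = −∫ û dλ` if `λ` is a nonnegative martingale measure, and `+∞` otherwise. -/
theorem stmt4
    {T n : ℕ} (hT : 1 ≤ T)
    (uhat : (Fin (T + 1) → Fin n → ℝ) → ℝ)
    (husc : UpperSemicontinuous uhat)
    (K : ℝ) (huK : ∀ s, uhat s ≤ K * psiM s)
    -- the superhedgeable set `C_û` and the indicator functional `H`
    (Cu : Set ((Fin (T + 1) → Fin n → ℝ) →ᵇ ℝ))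
    (hCu : Cu = {u | ∃ z, IsStrategy z ∧ ∀ s, uhat s + psiM s * u s ≤ gains z s})
    (H : ((Fin (T + 1) → Fin n → ℝ) →ᵇ ℝ) → EReal)
    (hH : H = fun u => if u ∈ Cu then (0 : EReal) else ⊤)
    -- its conjugate on `M`
    (Hconj : SignedMeasure (Fin (T + 1) → Fin n → ℝ) → EReal)
    (hHconj : Hconj = fun lam => ⨆ u : (Fin (T + 1) → Fin n → ℝ) →ᵇ ℝ,
      (((sInt lam (fun s => psiM s * u s) : ℝ) : EReal) - H u)) :
    ∀ lam : SignedMeasure (Fin (T + 1) → Fin n → ℝ),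
      Integrable psiM lam.totalVariation →
      Hconj lam =
        if 0 ≤ lam ∧ ∀ z, IsStrategy z → sInt lam (gains z) = 0
        then -(eInt lam.totalVariation (fun s => ((uhat s : ℝ) : EReal)))
        else ⊤ := by
  intro lam hlam
  subst hCu hH hHconj
  simp only [Set.mem_ofPred_eq]
  -- `W u` is the term of the supremum defining the conjugate
  set W : ((Fin (T + 1) → Fin n → ℝ) →ᵇ ℝ) → EReal := fun u =>
    ((sInt lam (fun s => psiM s * u s) : ℝ) : EReal) -
      (if ∃ z, IsStrategy z ∧ ∀ s, uhat s + psiM s * u s ≤ gains z s then (0 : EReal) else ⊤)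
    with hW
  have hWmem : ∀ u, (∃ z, IsStrategy z ∧ ∀ s, uhat s + psiM s * u s ≤ gains z s) →
      W u = ((sInt lam (fun s => psiM s * u s) : ℝ) : EReal) := by
    intro u hu
    simp only [hW, if_pos hu, sub_zero]
  have hWnot : ∀ u, (¬ ∃ z, IsStrategy z ∧ ∀ s, uhat s + psiM s * u s ≤ gains z s) →
      W u = ⊥ := by
    intro u hu
    simp only [hW, if_neg hu, sub_eq_add_neg, EReal.neg_top, EReal.add_bot]
  -- `C_û` contains the ray `-Kψ + a φ`, `a ≥ 0`, for every `φ` that is dominated by gains of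
  -- trading; if `φ` has positive integral, the supremum is infinite.
  have ray : ∀ φ : (Fin (T + 1) → Fin n → ℝ) → ℝ, Continuous φ → (∃ C, ∀ s, |φ s| ≤ C * psiM s) →
      (∃ z, IsStrategy z ∧ ∀ s, φ s ≤ gains z s) → 0 < sInt lam φ → ⨆ u, W u = ⊤ := by
    rintro φ hφ ⟨C, hC⟩ ⟨z, hz, hφz⟩ hpos
    obtain ⟨w, hw⟩ := exists_bcf_psiM_mul hφ hC
    have hφi : Integrable φ lam.totalVariation := integrable_of_le_psiM hlam hφ.measurable hC
    refine EReal.eq_top_iff_forall_lt _ |>.2 fun y => ?_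
    set L := sInt lam psiM with hL
    set a : ℝ := max 0 ((y + 1 + K * L) / sInt lam φ) with ha
    have ha0 : 0 ≤ a := le_max_left _ _
    have ha1 : y + 1 + K * L ≤ a * sInt lam φ := (div_le_iff₀ hpos).1 (le_max_right _ _)
    set v : (Fin (T + 1) → Fin n → ℝ) →ᵇ ℝ := BoundedContinuousFunction.const _ (-K) + a • w
      with hv
    have hu : ∀ s, psiM s * v s =
        (-K) * psiM s + a * φ s := by
      intro s
      rw [← hw s]
      simp only [hv, BoundedContinuousFunction.coe_add, BoundedContinuousFunction.coe_smul,
        Pi.add_apply, BoundedContinuousFunction.const_apply, smul_eq_mul]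
      ring
    refine lt_of_lt_of_le ?_ (le_iSup W v)
    rw [hWmem _ ⟨_, isStrategy_const_smul hz a, fun s => ?_⟩]
    · simp only [hu]
      rw [sInt_add_mul hlam hφi, EReal.coe_lt_coe_iff]
      linarith
    · rw [hu, gains_const_smul]
      have h1 := huK s
      have h2 := mul_le_mul_of_nonneg_left (hφz s) ha0
      linarith
  by_cases hnn : 0 ≤ lam
  swap
  · rw [if_neg fun h => hnn h.1]
    have : ∃ g : (Fin (T + 1) → Fin n → ℝ) →ᵇ ℝ, (∀ s, 0 ≤ g s) ∧ sInt lam g < 0 := by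
      by_contra! hcon
      exact hnn (nonneg_of_forall_bcf lam hcon)
    obtain ⟨g, hg0, hg⟩ := this
    refine ray (fun s => -g s) g.continuous.neg ⟨‖g‖, fun s => ?_⟩
      ⟨0, isStrategy_zero, fun s => ?_⟩ ?_
    · rw [abs_neg]
      have h1 := g.norm_coe_le_norm s
      rw [Real.norm_eq_abs] at h1
      nlinarith [one_le_psiM s, norm_nonneg g]
    · rw [gains_zero]
      linarith [hg0 s]
    · have : sInt lam (fun s => -g s) = -sInt lam g := by
        simp only [sInt, integral_neg]
        ring
      rw [this]
      linarith
  -- from here on `lam` is the positive measure `μ`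
  have hN := negPart_eq_zero_of_nonneg hnn
  set μ := lam.toJordanDecomposition.posPart with hμ
  have htv : lam.totalVariation = μ := by
    rw [SignedMeasure.totalVariation, hN, add_zero]
  have hsI : ∀ f, sInt lam f = ∫ s, f s ∂μ := by
    intro f
    rw [sInt, hN, integral_zero_measure, sub_zero]
  rw [htv] at hlam ⊢
  by_cases hmart : ∀ z, IsStrategy z → sInt lam (gains z) = 0
  swap
  · rw [if_neg fun h => hmart h.2]
    have : ∃ t i, ∃ g : (Fin (T + 1) → Fin n → ℝ) →ᵇ ℝ,
        sInt lam (gains (elementary t i g)) ≠ 0 := by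
      by_contra! hcon
      refine hmart fun z hz => ?_
      rw [hsI]
      exact integral_gains_eq_zero hlam (fun t i g => (hsI _).symm.trans (hcon t i g)) hz
    obtain ⟨t, i, g, hg⟩ := this
    have hst := isStrategy_elementary t i g
    have hcont := continuous_gains_elementary t i g
    rcases lt_or_gt_of_ne hg with h | h
    · have e : (fun s => -gains (elementary t i g) s) =
          gains (fun t' s => (-1 : ℝ) • elementary t i g t' s) := by
        funext s
        rw [gains_const_smul]
        ring
      refine ray (fun s => -gains (elementary t i g) s) hcont.neg ?_
        ⟨_, isStrategy_const_smul hst (-1), fun s => (congrFun e s).le⟩ ?_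
      · obtain ⟨C, hC⟩ := exists_gains_bound hst
        exact ⟨C, fun s => by rw [abs_neg]; exact hC s⟩
      · rw [hsI, integral_neg, ← hsI]
        linarith
    · exact ray _ hcont (exists_gains_bound hst) ⟨_, hst, fun s => le_rfl⟩ h
  rw [if_pos ⟨hnn, hmart⟩]
  have hum : Measurable uhat := husc.measurable
  have hpos : ∫⁻ s, ENNReal.ofReal (uhat s) ∂μ ≠ ⊤ :=
    ne_top_of_le_ne_top (hlam.const_mul K).lintegral_lt_top.ne
      (lintegral_mono fun s => ENNReal.ofReal_le_ofReal (huK s))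
  apply le_antisymm
  · by_cases hui : Integrable uhat μ
    swap
    · rw [eInt_of_not_integrable hum hpos hui, EReal.neg_bot]
      exact le_top
    rw [eInt_of_integrable hui]
    refine iSup_le fun u => ?_
    by_cases hu : ∃ z, IsStrategy z ∧ ∀ s, uhat s + psiM s * u s ≤ gains z s
    swap
    · rw [hWnot u hu]
      exact bot_le
    rw [hWmem u hu, hsI, ← EReal.coe_neg, EReal.coe_le_coe_iff]
    obtain ⟨z, hz, hzu⟩ := hu
    obtain ⟨C, hC⟩ := exists_gains_bound hz
    have h0 := hmart z hz
    rw [hsI] at h0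
    have hpu : Integrable (fun s => psiM s * u s) μ :=
      integrable_of_le_psiM hlam (continuous_psiM.mul u.continuous).measurable (C := ‖u‖)
        fun s => by
          rw [abs_mul, abs_of_pos (psiM_pos s), mul_comm]
          exact mul_le_mul_of_nonneg_right (u.norm_coe_le_norm s) (psiM_pos s).le
    have h1 := integral_mono (hui.add hpu)
      (integrable_of_le_psiM hlam (measurable_gains hz) hC) hzu
    rw [integral_add' hui hpu, h0] at h1
    linarith
  · by_contra hlt
    rw [not_le] at hlt
    obtain ⟨B, hB1, hB2⟩ := EReal.lt_iff_exists_real_btwn.1 hlt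
    refine absurd hB2 (not_lt.2 ?_)
    have hlsc : LowerSemicontinuous fun s => K * psiM s + -uhat s :=
      (continuous_const.mul continuous_psiM).lowerSemicontinuous.add husc.neg
    obtain ⟨g, hg0, hgh, hgt⟩ :=
      exists_bcf_tendsto_of_lsc hlsc fun s => by linarith [huK s]
    have hgi : ∀ k, Integrable (g k) μ := fun k =>
      BoundedContinuousFunction.integrable _ _
    set Ψ := ∫ s, psiM s ∂μ with hΨ
    have hgB : ∀ k, ∫ s, g k s ∂μ ≤ B + K * Ψ := by
      intro k
      obtain ⟨w, hw⟩ := exists_bcf_psiM_mul (φ := fun s => g k s - K * psiM s)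
        (C := ‖g k‖ + |K|) ((g k).continuous.sub (continuous_const.mul continuous_psiM))
        fun s => by
          have h1 := (g k).norm_coe_le_norm s
          rw [Real.norm_eq_abs] at h1
          refine (abs_sub _ _).trans ?_
          rw [abs_mul, abs_of_pos (psiM_pos s)]
          nlinarith [one_le_psiM s, norm_nonneg (g k)]
      have h1 := (le_iSup W w).trans hB1.le
      rw [hWmem w ⟨0, isStrategy_zero, fun s => ?_⟩, EReal.coe_le_coe_iff, hsI] at h1
      · simp only [hw] at h1
        rw [integral_sub (hgi k) (hlam.const_mul K), integral_const_mul] at h1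
        linarith
      · rw [hw, gains_zero]
        linarith [hgh k s]
    have hB0 : 0 ≤ B + K * Ψ := (integral_nonneg (hg0 0)).trans (hgB 0)
    have hhm : Measurable fun s => K * psiM s + -uhat s := hlsc.measurable
    have hfatou : ∫⁻ s, ENNReal.ofReal (K * psiM s + -uhat s) ∂μ ≤
        ENNReal.ofReal (B + K * Ψ) := by
      calc ∫⁻ s, ENNReal.ofReal (K * psiM s + -uhat s) ∂μ
          = ∫⁻ s, liminf (fun k => ENNReal.ofReal (g k s)) atTop ∂μ :=
            lintegral_congr fun s =>
              ((ENNReal.continuous_ofReal.tendsto _).comp (hgt s)).liminf_eq.symm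
        _ ≤ liminf (fun k => ∫⁻ s, ENNReal.ofReal (g k s) ∂μ) atTop :=
            lintegral_liminf_le fun k => (g k).continuous.measurable.ennreal_ofReal
        _ ≤ liminf (fun _ : ℕ => ENNReal.ofReal (B + K * Ψ)) atTop := by
            refine liminf_le_liminf (Eventually.of_forall fun k => ?_)
            rw [← ofReal_integral_eq_lintegral_ofReal (hgi k) (Eventually.of_forall (hg0 k))]
            exact ENNReal.ofReal_le_ofReal (hgB k)
        _ = ENNReal.ofReal (B + K * Ψ) := liminf_const _
    have hhnn : 0 ≤ᵐ[μ] fun s => K * psiM s + -uhat s :=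
      Eventually.of_forall fun s => by
        have := huK s
        simp only [Pi.zero_apply]
        linarith
    have hhi : Integrable (fun s => K * psiM s + -uhat s) μ :=
      ⟨hhm.aestronglyMeasurable, (hasFiniteIntegral_iff_ofReal hhnn).2
        (hfatou.trans_lt ENNReal.ofReal_lt_top)⟩
    have hui : Integrable uhat μ := by
      refine ((hlam.const_mul K).sub hhi).congr (Eventually.of_forall fun s => ?_)
      simp
    rw [← ofReal_integral_eq_lintegral_ofReal hhi hhnn, ENNReal.ofReal_le_ofReal_iff hB0,
      integral_add (hlam.const_mul K) hui.fun_neg, integral_const_mul, integral_neg] at hfatou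
    rw [eInt_of_integrable hui, ← EReal.coe_neg, EReal.coe_le_coe_iff]
    linarith

end
end
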